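/- Assume (Σ_n, T, (φ_n)) satisfies property (H*) with Hölder parameter r. Then for every k ∈ ℕ₀, with l_k := n_k + m_{k+n_k}, and all x, y ∈ Σ_{k+l_k}, the dual Ruelle images of Dirac measures satisfy W_k((ℒ^{l_k}_k)*(δ_x), (ℒ^{l_k}_k)*(δ_y)) ≤ s_k, where s_k := 1 − (1 − r^{n_k} α_k) C_{k+n_k}/B_{k+n_k} < 1. -/

import Mathlib

open MeasureTheory Real Filter

namespace NSShift

/-- The ambient sequence space `ℕ^ℕ`. -/
abbrev Seq := ℕ → ℕ

/-- The shift map `T`. -/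
def shift (x : Seq) : Seq := fun i => x (i + 1)

/-- Prepend one symbol to a sequence. -/
def cons (a : ℕ) (x : Seq) : Seq := fun i =>
  match i with
  | 0 => a
  | j + 1 => x j

/-- The non-stationary shift space `Σ_n` determined by alphabets `W` and
transition relations `A` (`A n i j` means `α^n_{ij} = 1`). -/
def Sig (W : ℕ → Set ℕ) (A : ℕ → ℕ → ℕ → Prop) (n : ℕ) : Set Seq :=
  {x | (∀ i, x i ∈ W (n + i)) ∧ ∀ i, A (n + i) (x i) (x (i + 1))}

/-- `x` and `y` agree in their first `k` coordinates (lie in a common `k`-cylinder). -/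
def agrees (x y : Seq) (k : ℕ) : Prop := ∀ i < k, x i = y i

open scoped Classical in
/-- The shift metric `d_r(x,y) = r^{min{i : x_i ≠ y_i}}`. -/
noncomputable def dr (r : ℝ) (x y : Seq) : ℝ :=
  if x = y then 0 else r ^ sInf {i | x i ≠ y i}

/-- `f` is locally `(r,m)`-Hölder continuous with Hölder constant `κ` of index `m` on `S`:
`V_k(f) ≤ κ r^k` for all `k ≥ m`. -/
def HolderOn (S : Set Seq) (r κ : ℝ) (m : ℕ) (f : Seq → ℝ) : Prop :=
  ∀ k, m ≤ k → ∀ x ∈ S, ∀ y ∈ S, agrees x y k → |f x - f y| ≤ κ * r ^ k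

/-- The Birkhoff sum `S_n(φ_k) = Σ_{i=0}^{n-1} φ_{k+i} ∘ T^i`. -/
noncomputable def birkhoff (φ : ℕ → Seq → ℝ) (k n : ℕ) (x : Seq) : ℝ :=
  ∑ i ∈ Finset.range n, φ (k + i) (shift^[i] x)

/-- `log B_m = Σ_{i=1}^{m} κ_{m−i} r^i`. -/
noncomputable def logB (κ : ℕ → ℝ) (r : ℝ) (m : ℕ) : ℝ :=
  ∑ i ∈ Finset.Icc 1 m, κ (m - i) * r ^ i

/-- `B_m = exp Σ_{i=1}^{m} κ_{m−i} r^i`. -/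
noncomputable def Bconst (κ : ℕ → ℝ) (r : ℝ) (m : ℕ) : ℝ := Real.exp (logB κ r m)


open scoped Classical in
/-- The Ruelle operator `ℒ_k(f)(x) = Σ_{Ty=x} e^{φ_k(y)} f(y)`, for `x ∈ Σ_{k+1}`. -/
noncomputable def Ruelle (W : ℕ → Set ℕ) (A : ℕ → ℕ → ℕ → Prop) (φ : ℕ → Seq → ℝ)
    (k : ℕ) (f : Seq → ℝ) (x : Seq) : ℝ :=
  ∑' a : ℕ, if cons a x ∈ Sig W A k then Real.exp (φ k (cons a x)) * f (cons a x) else 0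

/-- The iterated Ruelle operator `ℒ^n_k = ℒ_{k+n-1} ∘ ⋯ ∘ ℒ_k`. -/
noncomputable def RuelleIter (W : ℕ → Set ℕ) (A : ℕ → ℕ → ℕ → Prop) (φ : ℕ → Seq → ℝ)
    (k : ℕ) : ℕ → (Seq → ℝ) → Seq → ℝ
  | 0 => fun f => f
  | n + 1 => fun f => Ruelle W A φ (k + n) (RuelleIter W A φ k n f)

/-- `w` is a `k`-admissible word of length `len`. -/
def Adm (W : ℕ → Set ℕ) (A : ℕ → ℕ → ℕ → Prop) (k : ℕ) (w : ℕ → ℕ) (len : ℕ) : Prop :=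
  (∀ i < len, w i ∈ W (k + i)) ∧ ∀ i, i + 1 < len → A (k + i) (w i) (w (i + 1))

/-- Prepend the first `len` symbols of `w` to the sequence `x` (the inverse branch `τ_w`). -/
def prepend (w : ℕ → ℕ) (len : ℕ) (x : Seq) : Seq := fun i =>
  if i < len then w i else x (i - len)

/-- The Lipschitz constant of `f` on `S` with respect to the distance function `d`,
as the least constant `K ≥ 0` with `|f x − f y| ≤ K d(x,y)` on `S`. -/
noncomputable def LipC (S : Set Seq) (d : Seq → Seq → ℝ) (f : Seq → ℝ) : ℝ :=
  sInf {K : ℝ | 0 ≤ K ∧ ∀ x ∈ S, ∀ y ∈ S, |f x - f y| ≤ K * d x y}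

/-- The Vasershtein (Wasserstein) distance of two Borel measures with respect to the
cost function `d`, as the infimum of `∫ d dm` over couplings `m`. -/
noncomputable def Wass (d : Seq → Seq → ℝ) (μ ν : Measure Seq) : ℝ :=
  sInf {t : ℝ | ∃ m : Measure (Seq × Seq),
    m.map Prod.fst = μ ∧ m.map Prod.snd = ν ∧ t = ∫ p, d p.1 p.2 ∂m}

/-- The dual Ruelle operator `ℒ^*_k` on Borel measures, satisfying
`∫ f d(ℒ^*_k μ) = ∫ ℒ_k(f) dμ`. -/
noncomputable def dualRuelle (W : ℕ → Set ℕ) (A : ℕ → ℕ → ℕ → Prop) (φ : ℕ → Seq → ℝ)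
    (k : ℕ) (μ : Measure Seq) : Measure Seq :=
  Measure.sum fun a : ℕ =>
    (μ.withDensity fun x =>
      ENNReal.ofReal ((Sig W A k).indicator (fun y => Real.exp (φ k y)) (cons a x))).map (cons a)

/-- The iterated dual operator `(ℒ^n_k)^* = ℒ^*_k ∘ ⋯ ∘ ℒ^*_{k+n-1}`. -/
noncomputable def dualRuelleIter (W : ℕ → Set ℕ) (A : ℕ → ℕ → ℕ → Prop) (φ : ℕ → Seq → ℝ) :
    (k : ℕ) → ℕ → Measure Seq → Measure Seq
  | _, 0, μ => μ
  | k, n + 1, μ => dualRuelle W A φ k (dualRuelleIter W A φ (k + 1) n μ)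

/-- A non-stationary shift space `((Σ_n), T, (φ_n))` satisfying property `(H*)`, together
with the choices of the constants `β`, `n_k`, base letters `o_k`, mixing times `m_k`,
connecting words `u(x)` and lower bounds `C_k` used in the coupling construction. -/
structure HstarSystem where
  /-- the alphabets `𝒲¹_n` -/
  W : ℕ → Set ℕ
  /-- the transition matrices: `A n i j` iff `α^n_{ij} = 1` -/
  A : ℕ → ℕ → ℕ → Prop
  /-- the potentials `φ_n : Σ_n → ℝ` -/
  φ : ℕ → Seq → ℝ
  /-- the Hölder parameter -/
  r : ℝ
  /-- the parameter `β ∈ (0,1)` -/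
  β : ℝ
  /-- the Hölder constants `κ_n` of `φ_n` -/
  κ : ℕ → ℝ
  /-- the finite set `ℐ` from the big preimages property -/
  I : Finset ℕ
  /-- the infinite set `𝒦` from the big preimages property -/
  K : Set ℕ
  /-- the base letters `o_k ∈ 𝒲¹_k` -/
  o : ℕ → ℕ
  /-- the integers `n_k` -/
  nseq : ℕ → ℕ
  /-- the mixing times `m_k` -/
  mseq : ℕ → ℕ
  /-- the connecting words `u(x) ∈ 𝒲^{m_k}_k` (as sequences; only the first `m_k`
  symbols are relevant) -/
  u : ℕ → Seq → Seq
  /-- the constants `C_k` -/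
  Cseq : ℕ → ℝ
  hr : 0 < r ∧ r < 1
  hβ : 0 < β ∧ β < 1
  κnonneg : ∀ n, 0 ≤ κ n
  hKinf : K.Infinite
  /-- no zero rows -/
  row : ∀ n, ∀ i ∈ W n, ∃ j ∈ W (n + 1), A n i j
  /-- no zero columns -/
  col : ∀ n, ∀ i ∈ W (n + 1), ∃ j ∈ W n, A n j i
  /-- topological mixing -/
  mixing : ∀ k : ℕ, ∀ a ∈ W k, ∀ b : ℕ, ∃ N : ℕ, ∀ n, N ≤ n → b ∈ W (k + n) →
    ∃ x ∈ Sig W A k, x 0 = a ∧ x n = b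
  /-- big preimages along `𝒦` -/
  bigPre : ∀ n ∈ K, 1 ≤ n → ∀ a ∈ W n, ∃ b ∈ I, (b : ℕ) ∈ W (n - 1) ∧ A (n - 1) b a
  /-- `ℒ_n(1) = 1` -/
  normalized : ∀ k, ∀ x ∈ Sig W A (k + 1), Ruelle W A φ k (fun _ => 1) x = 1
  /-- `φ_n` is locally `(r,2)`-Hölder for `n ∉ 𝒦` -/
  holder2 : ∀ n ∉ K, HolderOn (Sig W A n) r (κ n) 2 (φ n)
  /-- `φ_n` is locally `(r,1)`-Hölder for `n ∈ 𝒦` -/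
  holder1 : ∀ n ∈ K, HolderOn (Sig W A n) r (κ n) 1 (φ n)
  ho : ∀ k, o k ∈ W k
  /-- `n_k ≥ ⌊−log α_k / log r⌋ + 1` where `α_k = B_k/β` -/
  hn : ∀ k, (⌊-Real.log (Bconst κ r k / β) / Real.log r⌋ + 1 : ℤ) ≤ (nseq k : ℤ)
  /-- `m_k ≥ 1`, `k + m_k ∈ 𝒦` -/
  hm_mem : ∀ k, 1 ≤ mseq k ∧ k + mseq k ∈ K
  /-- `(A_k ⋯ A_{k+m_k−2})_{o_k j} ≥ 1` for all `j ∈ ℐ ∩ 𝒲¹_{k+m_k−1}` -/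
  hm_conn : ∀ k, ∀ j ∈ I, (j : ℕ) ∈ W (k + mseq k - 1) →
    ∃ w : ℕ → ℕ, Adm W A k w (mseq k) ∧ w 0 = o k ∧ w (mseq k - 1) = j
  /-- minimality of `m_k` -/
  hm_min : ∀ k n, (1 ≤ n ∧ k + n ∈ K ∧ ∀ j ∈ I, (j : ℕ) ∈ W (k + n - 1) →
      ∃ w : ℕ → ℕ, Adm W A k w n ∧ w 0 = o k ∧ w (n - 1) = j) → mseq k ≤ n
  /-- the connecting word `u(x)` starts at `o_k`, ends in `ℐ`, and
  `x ∈ T^{m_k}([u(x)]_k)` -/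
  hu : ∀ k, ∀ x ∈ Sig W A (k + mseq k), prepend (u k x) (mseq k) x ∈ Sig W A k ∧
    u k x 0 = o k ∧ u k x (mseq k - 1) ∈ I
  hC_pos : ∀ k, 0 < Cseq k
  /-- `C_k` is a lower bound for `e^{S_{m_k} φ_k (τ_{u(x)} x)}` -/
  hC_le : ∀ k, ∀ x ∈ Sig W A (k + mseq k),
    Cseq k ≤ Real.exp (birkhoff φ k (mseq k) (prepend (u k x) (mseq k) x))

namespace HstarSystem

variable (S : HstarSystem)

/-- `α_k := B_k / β`. -/
noncomputable def alphaC (k : ℕ) : ℝ := Bconst S.κ S.r k / S.β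

/-- the metric `d̄_k(x,y) := min{1, α_k d_r(x,y)}`. -/
noncomputable def dbar (k : ℕ) (x y : Seq) : ℝ := min 1 (S.alphaC k * dr S.r x y)

/-- `s_k := 1 − (1 − r^{n_k} α_k) C_{k+n_k}/B_{k+n_k}`. -/
noncomputable def sconst (k : ℕ) : ℝ :=
  1 - (1 - S.r ^ S.nseq k * S.alphaC k) * S.Cseq (k + S.nseq k) / Bconst S.κ S.r (k + S.nseq k)

/-- `t_k := max{β, s_k}`. -/
noncomputable def tconst (k : ℕ) : ℝ := max S.β (S.sconst k)

/-- `l_k := n_k + m_{k+n_k}`. -/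
def lconst (k : ℕ) : ℕ := S.nseq k + S.mseq (k + S.nseq k)

end HstarSystem

theorem cons_meas (a : ℕ) : Measurable (cons a) := by
  refine measurable_pi_lambda _ fun i => ?_
  cases i with
  | zero => exact measurable_const
  | succ j => exact measurable_pi_apply j

theorem cons_shift (z : Seq) : cons (z 0) (shift z) = z := by
  funext i; cases i <;> rfl

theorem shift_mem {W A} {k : ℕ} {z : Seq} (hz : z ∈ Sig W A k) : shift z ∈ Sig W A (k + 1) := by
  refine ⟨fun i => ?_, fun i => ?_⟩
  · have := hz.1 (i + 1)
    rwa [show k + (i + 1) = k + 1 + i by ring] at this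
  · have := hz.2 (i + 1)
    rwa [show k + (i + 1) = k + 1 + i by ring] at this

theorem cons_mem {W A} {k a : ℕ} {z z' : Seq} (hz : cons a z ∈ Sig W A k)
    (hz' : z' ∈ Sig W A (k + 1)) (h : z 0 = z' 0) : cons a z' ∈ Sig W A k := by
  refine ⟨fun i => ?_, fun i => ?_⟩
  · cases i with
    | zero => exact hz.1 0
    | succ j =>
      have := hz'.1 j
      rwa [show k + 1 + j = k + (j + 1) by ring] at this
  · cases i with
    | zero =>
      have := hz.2 0
      change A (k + 0) a (z 0) at this
      rw [h] at this
      exact this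
    | succ j =>
      have := hz'.2 j
      rwa [show k + 1 + j = k + (j + 1) by ring] at this

/-- one-step weight -/
noncomputable def gw (W : ℕ → Set ℕ) (A : ℕ → ℕ → ℕ → Prop) (φ : ℕ → Seq → ℝ)
    (k : ℕ) (z : Seq) : ENNReal :=
  ENNReal.ofReal ((Sig W A k).indicator (fun y => Real.exp (φ k y)) z)

theorem dual_apply (W A φ) (k : ℕ) (μ : Measure Seq) {s : Set Seq} (hs : MeasurableSet s) :
    dualRuelle W A φ k μ s =
      ∑' a : ℕ, ∫⁻ x, (cons a ⁻¹' s).indicator (fun x => gw W A φ k (cons a x)) x ∂μ := by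
  unfold dualRuelle
  rw [Measure.sum_apply _ hs]
  refine tsum_congr fun a => ?_
  rw [Measure.map_apply (cons_meas a) hs, withDensity_apply _ (cons_meas a hs),
    lintegral_indicator (cons_meas a hs)]
  rfl

theorem dual_mono (W A φ) (k : ℕ) {μ ν : Measure Seq} (h : μ ≤ ν) :
    dualRuelle W A φ k μ ≤ dualRuelle W A φ k ν := by
  refine Measure.le_iff.2 fun s hs => ?_
  rw [dual_apply _ _ _ _ _ hs, dual_apply _ _ _ _ _ hs]
  exact ENNReal.tsum_le_tsum fun a => lintegral_mono' h le_rfl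

theorem dual_smul (W A φ) (k : ℕ) (c : ENNReal) (μ : Measure Seq) :
    dualRuelle W A φ k (c • μ) = c • dualRuelle W A φ k μ := by
  ext s hs
  rw [Measure.smul_apply, dual_apply _ _ _ _ _ hs, dual_apply _ _ _ _ _ hs, smul_eq_mul,
    ← ENNReal.tsum_mul_left]
  simp [lintegral_smul_measure]

theorem dual_sum (W A φ) (k : ℕ) {ι : Type} (p : ι → ENNReal) (X : ι → Seq) :
    dualRuelle W A φ k (Measure.sum fun i => p i • Measure.dirac (X i)) =
      Measure.sum (fun q : ℕ × ι => (p q.2 * gw W A φ k (cons q.1 (X q.2))) •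
        Measure.dirac (cons q.1 (X q.2))) := by
  ext s hs
  rw [dual_apply _ _ _ _ _ hs, Measure.sum_apply _ hs, ENNReal.tsum_prod']
  refine tsum_congr fun a => ?_
  rw [lintegral_sum_measure]
  refine tsum_congr fun i => ?_
  rw [lintegral_smul_measure, lintegral_dirac, Measure.smul_apply, Measure.dirac_apply' _ hs]
  by_cases h : cons a (X i) ∈ s
  · simp [Set.indicator, h]
  · simp [Set.indicator, h]

theorem iter_mono (W A φ) (n : ℕ) : ∀ (k : ℕ) {μ ν : Measure Seq}, μ ≤ ν →
    dualRuelleIter W A φ k n μ ≤ dualRuelleIter W A φ k n ν := by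
  induction n with
  | zero => intro k μ ν h; exact h
  | succ n ih => intro k μ ν h; exact dual_mono _ _ _ _ (ih _ h)

theorem iter_smul (W A φ) (n : ℕ) : ∀ (k : ℕ) (c : ENNReal) (μ : Measure Seq),
    dualRuelleIter W A φ k n (c • μ) = c • dualRuelleIter W A φ k n μ := by
  induction n with
  | zero => intro k c μ; rfl
  | succ n ih =>
    intro k c μ
    change dualRuelle W A φ k _ = c • dualRuelle W A φ k _
    rw [ih, dual_smul]

theorem iter_add (W A φ) (n m : ℕ) : ∀ (k : ℕ) (μ : Measure Seq),
    dualRuelleIter W A φ k (n + m) μ =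
      dualRuelleIter W A φ k n (dualRuelleIter W A φ (k + n) m μ) := by
  induction n with
  | zero => intro k μ; simp [dualRuelleIter]
  | succ n ih =>
    intro k μ
    rw [show n + 1 + m = (n + m) + 1 by ring]
    change dualRuelle W A φ k _ = dualRuelle W A φ k _
    rw [ih, show k + 1 + n = k + (n + 1) by ring]

theorem dirac_le (W A φ) (m : ℕ) : ∀ (k : ℕ) (z : Seq), z ∈ Sig W A k →
    ENNReal.ofReal (Real.exp (birkhoff φ k m z)) • Measure.dirac z ≤
      dualRuelleIter W A φ k m (Measure.dirac (shift^[m] z)) := by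
  induction m with
  | zero => intro k z hz; simp [birkhoff, dualRuelleIter]
  | succ m ih =>
    intro k z hz
    have h1 := dual_mono W A φ k (ih (k + 1) (shift z) (shift_mem hz))
    change _ ≤ dualRuelle W A φ k (dualRuelleIter W A φ (k+1) m (Measure.dirac (shift^[m] (shift z))))
    refine le_trans ?_ h1
    rw [dual_smul]
    have hb : birkhoff φ k (m + 1) z = birkhoff φ (k + 1) m (shift z) + φ k z := by
      unfold birkhoff
      rw [Finset.sum_range_succ']
      simp only [Function.iterate_succ_apply, Function.iterate_zero, id, add_zero]
      congr 1
      refine Finset.sum_congr rfl fun i _ => ?_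
      rw [show k + (i + 1) = k + 1 + i by ring]
    rw [hb, Real.exp_add, ENNReal.ofReal_mul (Real.exp_pos _).le, mul_smul]
    refine Measure.le_iff.2 fun s hs => ?_
    rw [Measure.smul_apply, Measure.smul_apply, smul_eq_mul, smul_eq_mul]
    refine mul_le_mul_right ?_ _
    change _ ≤ dualRuelle W A φ k (Measure.dirac (shift z)) s
    rw [dual_apply _ _ _ _ _ hs]
    refine le_trans ?_ (ENNReal.le_tsum (z 0))
    rw [lintegral_dirac, Measure.dirac_apply' _ hs]
    by_cases h : z ∈ s
    · simp [Set.indicator, h, cons_shift, gw, hz]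
    · simp [Set.indicator, h]

/-- recursive distortion -/
noncomputable def Dst (κ : ℕ → ℝ) (r : ℝ) : ℕ → ℕ → ℝ
  | _, 0 => 0
  | k, n + 1 => κ k * r ^ (n + 2) + Dst κ r (k + 1) n

theorem Dst_le (κ : ℕ → ℝ) (r : ℝ) (hκ : ∀ n, 0 ≤ κ n) (h0 : 0 ≤ r) (h1 : r ≤ 1) (n : ℕ) :
    ∀ k, Dst κ r k n ≤ ∑ i ∈ Finset.Icc 1 n, κ (k + n - i) * r ^ i := by
  induction n with
  | zero => intro k; simp [Dst]
  | succ n ih =>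
    intro k
    rw [Finset.sum_Icc_succ_top (by omega), Dst, add_comm]
    refine add_le_add ((ih (k + 1)).trans_eq ?_) ?_
    · rw [show k + 1 + n = k + (n + 1) by ring]
    · rw [Nat.add_sub_cancel]
      exact mul_le_mul_of_nonneg_left (pow_le_pow_of_le_one h0 h1 (by omega)) (hκ k)

theorem Dst_le_logB (κ : ℕ → ℝ) (r : ℝ) (hκ : ∀ n, 0 ≤ κ n) (h0 : 0 ≤ r) (h1 : r ≤ 1) (n k : ℕ) :
    Dst κ r k n ≤ logB κ r (k + n) := by
  refine (Dst_le κ r hκ h0 h1 n k).trans ?_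
  unfold logB
  refine Finset.sum_le_sum_of_subset_of_nonneg (Finset.Icc_subset_Icc le_rfl (by omega)) ?_
  intro i _ _
  exact mul_nonneg (hκ _) (pow_nonneg h0 _)

theorem norm_tsum (S : HstarSystem) (k : ℕ) (x : Seq) (hx : x ∈ Sig S.W S.A (k + 1)) :
    ∑' a : ℕ, gw S.W S.A S.φ k (cons a x) = 1 := by
  have h := S.normalized k x hx
  unfold Ruelle at h
  have hs : Summable fun a : ℕ => (Sig S.W S.A k).indicator (fun y => Real.exp (S.φ k y)) (cons a x) := by
    by_contra hc
    have : ∑' a : ℕ, (Sig S.W S.A k).indicator (fun y => Real.exp (S.φ k y)) (cons a x) = 0 :=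
      tsum_eq_zero_of_not_summable hc
    simp only [Set.indicator] at this
    simp only [mul_one] at h
    rw [this] at h
    exact zero_ne_one h
  unfold gw
  rw [← ENNReal.ofReal_tsum_of_nonneg _ hs]
  · simp only [Set.indicator]
    simp only [mul_one] at h
    rw [h]; simp
  · intro a
    exact Set.indicator_nonneg (fun _ _ => (Real.exp_pos _).le) _

theorem rep (S : HstarSystem) (n : ℕ) : ∀ (k : ℕ) (x y : Seq), x ∈ Sig S.W S.A (k + n) →
    y ∈ Sig S.W S.A (k + n) → x 0 = y 0 →
    ∃ (ι : Type) (p q : ι → ENNReal) (X Y : ι → Seq),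
      dualRuelleIter S.W S.A S.φ k n (Measure.dirac x) =
        Measure.sum (fun i => p i • Measure.dirac (X i)) ∧
      dualRuelleIter S.W S.A S.φ k n (Measure.dirac y) =
        Measure.sum (fun i => q i • Measure.dirac (Y i)) ∧
      (∀ i, agrees (X i) (Y i) (n + 1)) ∧
      (∀ i, p i = 0 ∨ (X i ∈ Sig S.W S.A k ∧ Y i ∈ Sig S.W S.A k)) ∧
      (∀ i, p i ≤ ENNReal.ofReal (Real.exp (Dst S.κ S.r k n)) * q i) ∧
      ∑' i, p i = 1 := by
  induction n with
  | zero =>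
    intro k x y hx hy h
    refine ⟨Unit, fun _ => 1, fun _ => 1, fun _ => x, fun _ => y, ?_, ?_, ?_, ?_, ?_, ?_⟩
    · simp [dualRuelleIter, Measure.sum_fintype]
    · simp [dualRuelleIter, Measure.sum_fintype]
    · intro _ i hi
      obtain rfl : i = 0 := by omega
      exact h
    · intro _; exact Or.inr ⟨hx, hy⟩
    · intro _; simp [Dst]
    · simp
  | succ n ih =>
    intro k x y hx hy h
    rw [show k + (n + 1) = k + 1 + n by ring] at hx hy
    obtain ⟨ι, p, q, X, Y, h1, h2, h3, h4, h5, h6⟩ := ih (k + 1) x y hx hy h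
    refine ⟨ℕ × ι, fun s => p s.2 * gw S.W S.A S.φ k (cons s.1 (X s.2)),
      fun s => q s.2 * gw S.W S.A S.φ k (cons s.1 (Y s.2)),
      fun s => cons s.1 (X s.2), fun s => cons s.1 (Y s.2), ?_, ?_, ?_, ?_, ?_, ?_⟩
    · change dualRuelle _ _ _ k _ = _
      rw [h1, dual_sum]
    · change dualRuelle _ _ _ k _ = _
      rw [h2, dual_sum]
    · rintro ⟨a, i⟩ j hj
      cases j with
      | zero => rfl
      | succ j => exact h3 i j (by omega)
    · rintro ⟨a, i⟩
      rcases h4 i with h | ⟨hX, hY⟩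
      · left; simp [h]
      · by_cases hc : cons a (X i) ∈ Sig S.W S.A k
        · right
          exact ⟨hc, cons_mem hc hY (h3 i 0 (by omega))⟩
        · left; simp [gw, hc]
    · rintro ⟨a, i⟩
      rcases h4 i with h | ⟨hX, hY⟩
      · simp [h]
      · by_cases hc : cons a (X i) ∈ Sig S.W S.A k
        · have hc' : cons a (Y i) ∈ Sig S.W S.A k := cons_mem hc hY (h3 i 0 (by omega))
          have hag : agrees (cons a (X i)) (cons a (Y i)) (n + 2) := by
            intro j hj
            cases j with
            | zero => rfl
            | succ j => exact h3 i j (by omega)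
          have hh : |S.φ k (cons a (X i)) - S.φ k (cons a (Y i))| ≤ S.κ k * S.r ^ (n + 2) := by
            by_cases hK : k ∈ S.K
            · exact S.holder1 k hK (n + 2) (by omega) _ hc _ hc' hag
            · exact S.holder2 k hK (n + 2) (by omega) _ hc _ hc' hag
          have hg : gw S.W S.A S.φ k (cons a (X i)) ≤
              ENNReal.ofReal (Real.exp (S.κ k * S.r ^ (n + 2))) *
                gw S.W S.A S.φ k (cons a (Y i)) := by
            simp only [gw, Set.indicator_of_mem hc, Set.indicator_of_mem hc']
            rw [← ENNReal.ofReal_mul (Real.exp_pos _).le, ← Real.exp_add]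
            refine ENNReal.ofReal_le_ofReal (Real.exp_le_exp.2 ?_)
            linarith [(abs_le.1 hh).2]
          change p i * _ ≤ _ * (q i * _)
          refine (mul_le_mul' (h5 i) hg).trans_eq ?_
          rw [Dst, Real.exp_add, ENNReal.ofReal_mul (Real.exp_pos _).le]
          ring
        · simp [gw, hc]
    · rw [ENNReal.tsum_prod', ENNReal.tsum_comm, ← h6]
      refine tsum_congr fun i => ?_
      dsimp only
      rw [ENNReal.tsum_mul_left]
      rcases h4 i with h | ⟨hX, hY⟩
      · simp [h]
      · rw [norm_tsum S k _ hX, mul_one]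

theorem iter_prob (S : HstarSystem) (k n : ℕ) (x : Seq) (hx : x ∈ Sig S.W S.A (k + n)) :
    IsProbabilityMeasure (dualRuelleIter S.W S.A S.φ k n (Measure.dirac x)) := by
  obtain ⟨ι, p, q, X, Y, h1, h2, h3, h4, h5, h6⟩ := rep S n k x x hx hx rfl
  refine ⟨?_⟩
  rw [h1, Measure.sum_apply _ MeasurableSet.univ]
  simpa using h6

theorem coupling (d : Seq → Seq → ℝ) (hd0 : ∀ x y, 0 ≤ d x y) (hd1 : ∀ x y, d x y ≤ 1)
    (μ ν : Measure Seq) [IsProbabilityMeasure μ] [IsProbabilityMeasure ν]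
    (m : Measure (Seq × Seq)) (h1 : m.map Prod.fst ≤ μ) (h2 : m.map Prod.snd ≤ ν)
    (θ e : ℝ) (hθ : 0 ≤ θ) (he : 0 ≤ e) (hm : m Set.univ = ENNReal.ofReal θ)
    (hi : ∫⁻ z, ENNReal.ofReal (d z.1 z.2) ∂m ≤ ENNReal.ofReal (e * θ)) :
    Wass d μ ν ≤ 1 - (1 - e) * θ := by
  have m1 : (m.map Prod.fst) Set.univ = ENNReal.ofReal θ := by
    rw [Measure.map_apply measurable_fst MeasurableSet.univ]; simpa using hm
  have m2 : (m.map Prod.snd) Set.univ = ENNReal.ofReal θ := by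
    rw [Measure.map_apply measurable_snd MeasurableSet.univ]; simpa using hm
  have hθ1 : θ ≤ 1 := by
    have := h1 Set.univ
    rw [m1, measure_univ] at this
    simpa using this
  have : IsFiniteMeasure (m.map Prod.fst) := ⟨by rw [m1]; exact ENNReal.ofReal_lt_top⟩
  have : IsFiniteMeasure (m.map Prod.snd) := ⟨by rw [m2]; exact ENNReal.ofReal_lt_top⟩
  set μ' := μ - m.map Prod.fst with hμ'
  set ν' := ν - m.map Prod.snd with hν'
  have u1 : μ' Set.univ = ENNReal.ofReal (1 - θ) := by
    rw [hμ', Measure.sub_apply MeasurableSet.univ h1, m1, measure_univ,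
      ENNReal.ofReal_sub _ hθ, ENNReal.ofReal_one]
  have u2 : ν' Set.univ = ENNReal.ofReal (1 - θ) := by
    rw [hν', Measure.sub_apply MeasurableSet.univ h2, m2, measure_univ,
      ENNReal.ofReal_sub _ hθ, ENNReal.ofReal_one]
  obtain ⟨R, hR1, hR2⟩ : ∃ R : Measure (Seq × Seq), R.map Prod.fst = μ' ∧ R.map Prod.snd = ν' := by
    rcases hθ1.eq_or_lt with rfl | hlt
    · refine ⟨0, ?_, ?_⟩
      · rw [Measure.map_zero]; symm; rw [← Measure.measure_univ_eq_zero, u1]; simp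
      · rw [Measure.map_zero]; symm; rw [← Measure.measure_univ_eq_zero, u2]; simp
    · have hne : ENNReal.ofReal (1 - θ) ≠ 0 := by simpa using hlt
      refine ⟨(ENNReal.ofReal (1 - θ))⁻¹ • μ'.prod ν', ?_, ?_⟩
      · rw [Measure.map_smul, Measure.map_fst_prod, u2, smul_smul,
          ENNReal.inv_mul_cancel hne ENNReal.ofReal_ne_top, one_smul]
      · rw [Measure.map_smul, Measure.map_snd_prod, u1, smul_smul,
          ENNReal.inv_mul_cancel hne ENNReal.ofReal_ne_top, one_smul]
  have hRu : R Set.univ = ENNReal.ofReal (1 - θ) := by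
    rw [← u1, ← hR1, Measure.map_apply measurable_fst MeasurableSet.univ]; simp
  have hmem : (∫ z, d z.1 z.2 ∂(m + R)) ≤ 1 - (1 - e) * θ := by
    have hnn : 0 ≤ 1 - (1 - e) * θ := by nlinarith [mul_nonneg he hθ]
    by_cases hint : AEStronglyMeasurable (fun z : Seq × Seq => d z.1 z.2) (m + R)
    · rw [integral_eq_lintegral_of_nonneg_ae (Eventually.of_forall fun z => hd0 _ _) hint]
      refine ENNReal.toReal_le_of_le_ofReal hnn ?_
      rw [lintegral_add_measure]
      have : ∫⁻ z, ENNReal.ofReal (d z.1 z.2) ∂(R) ≤ ENNReal.ofReal (1 - θ) := by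
        calc _ ≤ ∫⁻ z, 1 ∂(R) := lintegral_mono fun z => by simpa using hd1 z.1 z.2
          _ = _ := by simp [hRu]
      refine (add_le_add hi this).trans_eq ?_
      rw [← ENNReal.ofReal_add (mul_nonneg he hθ) (by linarith)]
      congr 1; ring
    · rw [integral_non_aestronglyMeasurable hint]; exact hnn
  refine (csInf_le ?_ ?_).trans hmem
  · refine ⟨0, ?_⟩
    rintro t ⟨M, _, _, rfl⟩
    exact integral_nonneg fun z => hd0 _ _
  · refine ⟨m + R, ?_, ?_, rfl⟩
    · rw [Measure.map_add _ _ measurable_fst, hR1, add_comm, hμ', Measure.sub_add_cancel_of_le h1]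
    · rw [Measure.map_add _ _ measurable_snd, hR2, add_comm, hν', Measure.sub_add_cancel_of_le h2]

theorem dr_nonneg {r : ℝ} (hr : 0 ≤ r) (x y : Seq) : 0 ≤ dr r x y := by
  unfold dr; split_ifs
  · exact le_rfl
  · exact pow_nonneg hr _

theorem dr_le {r : ℝ} (h0 : 0 ≤ r) (h1 : r ≤ 1) {x y : Seq} {n : ℕ} (h : agrees x y (n + 1)) :
    dr r x y ≤ r ^ n := by
  unfold dr; split_ifs with hxy
  · exact pow_nonneg h0 _
  · refine pow_le_pow_of_le_one h0 h1 ?_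
    refine le_csInf (Function.ne_iff.1 hxy) ?_
    intro i hi
    by_contra hc
    exact hi (h i (by omega))

theorem alpha_lt (S : HstarSystem) (k : ℕ) : 0 < S.alphaC k ∧ S.r ^ S.nseq k * S.alphaC k < 1 := by
  have ha : 0 < S.alphaC k := div_pos (Real.exp_pos _) S.hβ.1
  refine ⟨ha, ?_⟩
  have h := S.hn k
  have hl : Real.log S.r < 0 := Real.log_neg S.hr.1 S.hr.2
  have h2 : -Real.log (S.alphaC k) / Real.log S.r < S.nseq k := by
    have h3 := Int.lt_floor_add_one (-Real.log (S.alphaC k) / Real.log S.r)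
    have h4 : ((⌊-Real.log (S.alphaC k) / Real.log S.r⌋ + 1 : ℤ) : ℝ) ≤ ((S.nseq k : ℤ) : ℝ) :=
      Int.cast_le.2 h
    push_cast at h4
    linarith
  rw [div_lt_iff_of_neg hl] at h2
  have hp : 0 < S.r ^ S.nseq k := pow_pos S.hr.1 _
  rw [← Real.log_neg_iff (mul_pos hp ha), Real.log_mul hp.ne' ha.ne', Real.log_pow]
  linarith

theorem shift_iter (m : ℕ) : ∀ (z : Seq) (i : ℕ), (shift^[m] z) i = z (i + m) := by
  induction m with
  | zero => intro z i; rfl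
  | succ m ih =>
    intro z i
    rw [Function.iterate_succ_apply, ih]
    change z (i + m + 1) = _
    rfl

theorem shift_prepend (w : ℕ → ℕ) (m : ℕ) (x : Seq) : shift^[m] (prepend w m x) = x := by
  funext i
  rw [shift_iter]
  simp [prepend]

/-- the point `τ_{u(x)} x` dominated below by the dual image -/
theorem base_pt (S : HstarSystem) (k : ℕ) (x : Seq) (hx : x ∈ Sig S.W S.A (k + S.mseq k)) :
    ∃ z ∈ Sig S.W S.A k, z 0 = S.o k ∧ ENNReal.ofReal (S.Cseq k) • Measure.dirac z ≤
      dualRuelleIter S.W S.A S.φ k (S.mseq k) (Measure.dirac x) := by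
  obtain ⟨h1, h2, _⟩ := S.hu k x hx
  refine ⟨_, h1, ?_, ?_⟩
  · have := (S.hm_mem k).1
    simp [prepend, show 0 < S.mseq k by omega, h2]
  · have h := dirac_le S.W S.A S.φ (S.mseq k) k _ h1
    rw [shift_prepend] at h
    refine le_trans ?_ h
    refine Measure.le_iff.2 fun s hs => ?_
    rw [Measure.smul_apply, Measure.smul_apply, smul_eq_mul, smul_eq_mul]
    exact mul_le_mul_left (ENNReal.ofReal_le_ofReal (S.hC_le k x hx)) _

/-- (Concentration near the diagonal.) Under property `(H*)`, for all
`x, y ∈ Σ_{k+l_k}` the dual Ruelle images of the Dirac measures satisfy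
`W_k((ℒ^{l_k}_k)^* δ_x, (ℒ^{l_k}_k)^* δ_y) ≤ s_k` with
`s_k = 1 − (1 − r^{n_k} α_k) C_{k+n_k}/B_{k+n_k} < 1`. -/
theorem dual_ruelle_dirac_concentration (S : HstarSystem) (k : ℕ)
    (x : Seq) (hx : x ∈ Sig S.W S.A (k + S.lconst k))
    (y : Seq) (hy : y ∈ Sig S.W S.A (k + S.lconst k)) :
    S.sconst k < 1 ∧
      Wass (S.dbar k) (dualRuelleIter S.W S.A S.φ k (S.lconst k) (Measure.dirac x))
          (dualRuelleIter S.W S.A S.φ k (S.lconst k) (Measure.dirac y)) ≤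
        S.sconst k := by
  obtain ⟨ha, hlt⟩ := alpha_lt S k
  have hB : 0 < Bconst S.κ S.r (k + S.nseq k) := Real.exp_pos _
  have hC := S.hC_pos (k + S.nseq k)
  have hθ : 0 < S.Cseq (k + S.nseq k) / Bconst S.κ S.r (k + S.nseq k) := div_pos hC hB
  have hs : S.sconst k = 1 - (1 - S.r ^ S.nseq k * S.alphaC k) *
      (S.Cseq (k + S.nseq k) / Bconst S.κ S.r (k + S.nseq k)) := by
    unfold HstarSystem.sconst; rw [mul_div_assoc]
  refine ⟨by rw [hs]; nlinarith [mul_pos (sub_pos.2 hlt) hθ], ?_⟩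
  have hx' := hx
  have hy' := hy
  rw [HstarSystem.lconst, ← add_assoc] at hx' hy'
  obtain ⟨X0, hX0, hX00, hXle⟩ := base_pt S _ x hx'
  obtain ⟨Y0, hY0, hY00, hYle⟩ := base_pt S _ y hy'
  haveI := iter_prob S k _ x hx
  haveI := iter_prob S k _ y hy
  have hXl := iter_mono S.W S.A S.φ (S.nseq k) k hXle
  have hYl := iter_mono S.W S.A S.φ (S.nseq k) k hYle
  rw [iter_smul, ← iter_add] at hXl hYl
  obtain ⟨ι, p, q, X, Y, h1, h2, h3, h4, h5, h6⟩ :=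
    rep S (S.nseq k) k X0 Y0 hX0 hY0 (hX00.trans hY00.symm)
  rw [h1] at hXl
  rw [h2] at hYl
  have hD : ENNReal.ofReal (Real.exp (Dst S.κ S.r k (S.nseq k))) ≤
      ENNReal.ofReal (Bconst S.κ S.r (k + S.nseq k)) :=
    ENNReal.ofReal_le_ofReal (Real.exp_le_exp.2
      (Dst_le_logB S.κ S.r S.κnonneg S.hr.1.le S.hr.2.le _ _))
  have hB1 : 1 ≤ Bconst S.κ S.r (k + S.nseq k) :=
    Real.one_le_exp (Finset.sum_nonneg fun i _ =>
      mul_nonneg (S.κnonneg _) (pow_nonneg S.hr.1.le _))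
  set C := S.Cseq (k + S.nseq k)
  set B := Bconst S.κ S.r (k + S.nseq k)
  rw [hs]
  refine coupling _ ?_ ?_ _ _
    (Measure.sum fun i => (ENNReal.ofReal (C / B) * p i) • Measure.dirac (X i, Y i)) ?_ ?_ _ _
    hθ.le (mul_nonneg (pow_nonneg S.hr.1.le _) ha.le) ?_ ?_
  · intro a b
    exact le_min zero_le_one (mul_nonneg ha.le (dr_nonneg S.hr.1.le _ _))
  · intro a b
    exact min_le_left _ _
  · refine le_trans ?_ hXl
    refine Measure.le_iff.2 fun s hs => ?_
    rw [Measure.map_apply measurable_fst hs, Measure.sum_apply _ (measurable_fst hs),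
      Measure.smul_apply, Measure.sum_apply _ hs, smul_eq_mul, ← ENNReal.tsum_mul_left]
    refine ENNReal.tsum_le_tsum fun i => ?_
    rw [Measure.smul_apply, Measure.smul_apply, Measure.dirac_apply' _ hs,
      Measure.dirac_apply' _ (measurable_fst hs), smul_eq_mul, smul_eq_mul, ← mul_assoc]
    refine mul_le_mul' (mul_le_mul' (ENNReal.ofReal_le_ofReal (div_le_self hC.le hB1)) le_rfl) ?_
    exact le_of_eq rfl
  · refine le_trans ?_ hYl
    refine Measure.le_iff.2 fun s hs => ?_
    rw [Measure.map_apply measurable_snd hs, Measure.sum_apply _ (measurable_snd hs),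
      Measure.smul_apply, Measure.sum_apply _ hs, smul_eq_mul, ← ENNReal.tsum_mul_left]
    refine ENNReal.tsum_le_tsum fun i => ?_
    rw [Measure.smul_apply, Measure.smul_apply, Measure.dirac_apply' _ hs,
      Measure.dirac_apply' _ (measurable_snd hs), smul_eq_mul, smul_eq_mul, ← mul_assoc]
    refine mul_le_mul' ?_ (le_of_eq rfl)
    calc ENNReal.ofReal (C / B) * p i ≤ ENNReal.ofReal (C / B) * (ENNReal.ofReal B * q i) :=
          mul_le_mul' le_rfl ((h5 i).trans (mul_le_mul' hD le_rfl))
      _ = ENNReal.ofReal C * q i := by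
          rw [← mul_assoc, ← ENNReal.ofReal_mul hθ.le, div_mul_cancel₀ _ hB.ne']
  · rw [Measure.sum_apply _ MeasurableSet.univ]
    simp [ENNReal.tsum_mul_left, h6]
  · rw [lintegral_sum_measure]
    calc _ ≤ ∑' i, (ENNReal.ofReal (C / B) * p i) *
            ENNReal.ofReal (S.r ^ S.nseq k * S.alphaC k) := by
          refine ENNReal.tsum_le_tsum fun i => ?_
          rw [lintegral_smul_measure, lintegral_dirac, smul_eq_mul]
          refine mul_le_mul' le_rfl (ENNReal.ofReal_le_ofReal ((min_le_right _ _).trans ?_))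
          rw [mul_comm]
          exact mul_le_mul_of_nonneg_right (dr_le S.hr.1.le S.hr.2.le (h3 i)) ha.le
      _ = _ := by
          rw [ENNReal.tsum_mul_right, ENNReal.tsum_mul_left, h6, mul_one, mul_comm,
            ← ENNReal.ofReal_mul (mul_nonneg (pow_nonneg S.hr.1.le _) ha.le)]


end NSShift
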